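/- Let p > 2, w(s) = (cosh s)^{-2/(p-2)}, and χ(s) = -((p-2)/(4(p-1))) (2 w(s) - w(s)^{p-1}). Then ∫_ℝ χ(s) w(s)^{2p-3} ds = -( (p-2) p (3p-4)/((p-1)(3p-2)(5p-6)) ) ∫_ℝ w(s)^p ds. -/

import Mathlib

open MeasureTheory

lemma aux_int (a : ℝ) (ha : 0 < a) : Integrable (fun s : ℝ => Real.cosh s ^ (-a)) := by
  have h1 : IntegrableOn (fun s : ℝ => 2 ^ a * Real.exp (-a * s)) (Set.Ioi 0) :=
    (integrableOn_exp_mul_Ioi (by linarith) 0).const_mul _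
  have h2 : IntegrableOn (fun s : ℝ => 2 ^ a * Real.exp (a * s)) (Set.Iic 0) :=
    (integrableOn_exp_mul_Iic (by linarith) 0).const_mul _
  have hc : Continuous (fun s : ℝ => Real.cosh s ^ (-a)) :=
    Real.continuous_cosh.rpow_const (fun s => Or.inl (Real.cosh_pos s).ne')
  have key : ∀ s t : ℝ, Real.exp t / 2 ≤ Real.cosh s →
      ‖Real.cosh s ^ (-a)‖ ≤ 2 ^ a * Real.exp (-a * t) := by
    intro s t h
    rw [Real.norm_of_nonneg (Real.rpow_nonneg (Real.cosh_pos s).le _)]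
    refine (Real.rpow_le_rpow_of_nonpos (by positivity) h (by linarith)).trans (le_of_eq ?_)
    rw [Real.div_rpow (Real.exp_pos _).le (by norm_num), ← Real.exp_mul,
      Real.rpow_neg (by norm_num), div_inv_eq_mul, mul_comm, mul_comm t]
  rw [← integrableOn_univ, ← Set.Iic_union_Ioi (a := (0 : ℝ))]
  refine IntegrableOn.union (h2.mono' hc.aestronglyMeasurable (ae_of_all _ fun s => ?_))
    (h1.mono' hc.aestronglyMeasurable (ae_of_all _ fun s => ?_))
  · have := key s (-s) (by rw [Real.cosh_eq]; linarith [Real.exp_pos s])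
    simpa using this
  · exact key s s (by rw [Real.cosh_eq]; linarith [Real.exp_pos (-s)])

lemma aux_rec (a : ℝ) (ha : 0 < a) :
    (a + 1) * ∫ s : ℝ, Real.cosh s ^ (-(a + 2)) = a * ∫ s : ℝ, Real.cosh s ^ (-a) := by
  have i1 := aux_int a ha
  have i2 := aux_int (a + 2) (by linarith)
  have hd : ∀ s : ℝ, HasDerivAt (fun s => Real.sinh s * Real.cosh s ^ (-a - 1))
      ((a + 1) * Real.cosh s ^ (-(a + 2)) - a * Real.cosh s ^ (-a)) s := by
    intro s
    have hp := Real.cosh_pos s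
    have := (Real.hasDerivAt_sinh s).mul
      ((Real.hasDerivAt_cosh s).rpow_const (p := -a - 1) (Or.inl hp.ne'))
    refine this.congr_deriv ?_
    have e1 : Real.cosh s ^ (-a - 1) = Real.cosh s ^ (-(a + 2)) * Real.cosh s := by
      rw [← Real.rpow_add_one hp.ne']; congr 1; ring
    have e2 : Real.cosh s ^ (-a) = Real.cosh s ^ (-(a + 2)) * Real.cosh s ^ 2 := by
      rw [← Real.rpow_add_natCast hp.ne']; congr 1; push_cast; ring
    have e3 : -a - 1 - 1 = -(a + 2) := by ring
    rw [e3, e1, e2]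
    have := Real.cosh_sq s
    linear_combination (a + 1) * Real.cosh s ^ (-(a + 2)) * this
  have hc : Continuous (fun s : ℝ => Real.sinh s * Real.cosh s ^ (-a - 1)) :=
    continuous_iff_continuousAt.2 fun s => (hd s).continuousAt
  have hi : Integrable (fun s : ℝ => Real.sinh s * Real.cosh s ^ (-a - 1)) := by
    refine i1.mono' hc.aestronglyMeasurable (ae_of_all _ fun s => ?_)
    have hp := Real.cosh_pos s
    rw [norm_mul, Real.norm_of_nonneg (Real.rpow_nonneg hp.le _), Real.norm_eq_abs]
    have e1 : Real.cosh s ^ (-a) = Real.cosh s * Real.cosh s ^ (-a - 1) := by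
      rw [mul_comm, ← Real.rpow_add_one hp.ne']; congr 1; ring
    rw [e1]
    refine mul_le_mul_of_nonneg_right ?_ (Real.rpow_nonneg hp.le _)
    refine abs_le_of_sq_le_sq ?_ hp.le
    have := Real.cosh_sq s
    linarith
  have := integral_eq_zero_of_hasDerivAt_of_integrable hd
    ((i2.const_mul _).sub (i1.const_mul _)) hi
  rw [integral_sub (i2.const_mul _) (i1.const_mul _), integral_const_mul, integral_const_mul]
    at this
  linarith

/-- For `p > 2`, `w(s) = (cosh s)^{-2/(p-2)}` and
`χ(s) = -((p-2)/(4(p-1)))(2w - w^{p-1})`, one has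
`∫ χ w^{2p-3} = -((p-2)p(3p-4)/((p-1)(3p-2)(5p-6))) ∫ w^p`. -/
theorem statement13 (p : ℝ) (hp : 2 < p)
    (w : ℝ → ℝ) (hw : ∀ s, w s = Real.cosh s ^ (-(2 / (p - 2))))
    (χ : ℝ → ℝ) (hχ : ∀ s, χ s = -((p - 2) / (4 * (p - 1))) * (2 * w s - w s ^ (p - 1))) :
    (∫ s : ℝ, χ s * w s ^ (2 * p - 3)) =
      -((p - 2) * p * (3 * p - 4) / ((p - 1) * (3 * p - 2) * (5 * p - 6))) *
        ∫ s : ℝ, w s ^ p := by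
  have h2 : 0 < p - 2 := by linarith
  obtain ⟨a, ha⟩ : ∃ a, a = 2 * p / (p - 2) := ⟨_, rfl⟩
  have hap : 0 < a := by rw [ha]; positivity
  have hwpos : ∀ s, 0 < w s := fun s => by rw [hw]; exact Real.rpow_pos_of_pos (Real.cosh_pos s) _
  have hpow : ∀ s r b, b * (p - 2) = 2 * r → w s ^ r = Real.cosh s ^ (-b) := by
    intro s r b h
    rw [hw, ← Real.rpow_mul (Real.cosh_pos s).le]
    congr 1
    field_simp
    linarith
  have ha' : a * (p - 2) = 2 * p := by rw [ha]; field_simp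
  have e1 : ∀ s, χ s * w s ^ (2 * p - 3) = -((p - 2) / (4 * (p - 1))) *
      (2 * Real.cosh s ^ (-(a + 2)) - Real.cosh s ^ (-(a + 2 + 2))) := by
    intro s
    rw [hχ, ← hpow s (2 * p - 2) (a + 2) (by linarith),
      ← hpow s (3 * p - 4) (a + 2 + 2) (by linarith)]
    have x1 : w s ^ (2 * p - 2) = w s * w s ^ (2 * p - 3) := by
      rw [mul_comm (w s), ← Real.rpow_add_one (hwpos s).ne']; congr 1; ring
    have x2 : w s ^ (3 * p - 4) = w s ^ (p - 1) * w s ^ (2 * p - 3) := by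
      rw [← Real.rpow_add (hwpos s)]; congr 1; ring
    rw [x1, x2]; ring
  have e2 : ∀ s, w s ^ p = Real.cosh s ^ (-a) := fun s => hpow s p a ha'
  simp_rw [e1, e2]
  have r1 := aux_rec a hap
  have r2 := aux_rec (a + 2) (by linarith)
  rw [integral_const_mul, integral_sub ((aux_int (a + 2) (by linarith)).const_mul _)
    (aux_int (a + 2 + 2) (by linarith)), integral_const_mul]
  generalize (∫ s : ℝ, Real.cosh s ^ (-(a + 2 + 2))) = J4 at *
  generalize (∫ s : ℝ, Real.cosh s ^ (-(a + 2))) = J2 at *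
  generalize (∫ s : ℝ, Real.cosh s ^ (-a)) = J0 at *
  have q1 : p - 1 ≠ 0 := by linarith
  have q2 : 3 * p - 2 ≠ 0 := by linarith
  have q3 : 5 * p - 6 ≠ 0 := by linarith
  have q2' : p * 3 - 2 ≠ 0 := by linarith
  have q3' : p * 5 - 6 ≠ 0 := by linarith
  have s1 : J2 = 2 * p / (3 * p - 2) * J0 := by
    have : (3 * p - 2) * J2 = 2 * p * J0 := by
      linear_combination (p - 2) * r1 + (J0 - J2) * ha'
    field_simp; linarith
  have s2 : J4 = 4 * (p - 1) / (5 * p - 6) * J2 := by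
    have : (5 * p - 6) * J4 = 4 * (p - 1) * J2 := by
      linear_combination (p - 2) * r2 + (J2 - J4) * ha'
    field_simp; linarith
  rw [s2, s1]
  field_simp
  ring
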